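/- Let L > 0, β ∈ [0, 1], γ = (2/L)·(1+β)/(1+2β), and a ∈ ℝ with a ≠ 0. Consider f : ℝ → ℝ, f(y) = (L/2)y², which is convex and L-smooth. Then the sequence defined by y_0 = a, y_1 = −a, and y_{t+1} = (1+β)(y_t − γ f'(y_t)) − β(y_{t−1} − γ f'(y_{t−1})) for t ≥ 1 satisfies y_t = (−1)^t a for all t; in particular this Nesterov-accelerated-gradient trajectory is 2-cyclic and non-constant, so it does not converge. -/

import Mathlib

/-!
On the quadratic `(L / 2) ‖x‖²` the gradient is `L • x`, so the iteration is the linear recurrence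
`y (t + 2) = (1 - γ * L) • ((1 + β) • y (t + 1) - β • y t)`. Its characteristic polynomial vanishes
at `-1` exactly when `γ * L * (1 + 2 * β) = 2 * (1 + β)`, which is the boundary step-size. The orbit
through `a, -a` is then antiperiodic, and a periodic sequence can converge only if it is constant.
-/

open Filter Function Topology
open scoped Gradient

section PeriodicLimits

variable {X : Type*} [TopologicalSpace X] [T1Space X] {f : ℕ → X} {c : ℕ}

theorem eq_of_periodic_of_tendsto_atTop {l : X} (hf : Periodic f c) (hc : 0 < c)
    (hl : Tendsto f atTop (𝓝 l)) (t : ℕ) : f t = l := by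
  have hshift : Tendsto (fun n : ℕ => t + n • c) atTop atTop :=
    tendsto_atTop_mono (fun _ => Nat.le_add_left _ t) (tendsto_id.atTop_nsmul_const hc)
  have hconst : Tendsto (fun _ : ℕ => f t) atTop (𝓝 l) :=
    (hl.comp hshift).congr fun n => hf.nsmul n t
  exact tendsto_const_nhds_iff.mp hconst

theorem not_tendsto_atTop_of_periodic_of_ne {s t : ℕ} (hf : Periodic f c) (hc : 0 < c)
    (hne : f s ≠ f t) : ¬∃ l, Tendsto f atTop (𝓝 l) := fun ⟨_, hl⟩ =>
  hne <| (eq_of_periodic_of_tendsto_atTop hf hc hl s).trans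
    (eq_of_periodic_of_tendsto_atTop hf hc hl t).symm

end PeriodicLimits

theorem eq_neg_one_pow_smul_of_antiperiodic_one {R M : Type*} [Ring R] [AddCommGroup M] [Module R M]
    {y : ℕ → M} (hy : Antiperiodic y 1) (t : ℕ) : y t = (-1 : R) ^ t • y 0 := by
  induction t with
  | zero => rw [pow_zero, one_smul]
  | succ t ih => rw [hy t, ih, pow_succ', neg_one_mul, neg_smul]

section Recurrence

variable {R M : Type*} [CommRing R] [AddCommGroup M] [Module R M]

/-- `y` follows Nesterov's accelerated gradient iteration, in its one-sequence form, with step-size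
`γ` and momentum `β` for the gradient field `g`. The recurrence is indexed from `t + 2` so that no
truncated subtraction occurs. -/
def IsNAGTrajectory (γ β : R) (g : M → M) (y : ℕ → M) : Prop :=
  ∀ t, y (t + 2) = (1 + β) • (y (t + 1) - γ • g (y (t + 1))) - β • (y t - γ • g (y t))

theorem IsNAGTrajectory.antiperiodic_one {L γ β : R} {y : ℕ → M}
    (hy : IsNAGTrajectory γ β (fun x => L • x) y) (hγ : γ * L * (1 + 2 * β) = 2 * (1 + β))
    (h01 : y 1 = -y 0) : Antiperiodic y 1 := by
  intro t
  induction t with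
  | zero => exact h01
  | succ t ih =>
    have hprev : y t = -y (t + 1) := by rw [ih, neg_neg]
    calc y (t + 2)
        = ((1 + β) * (1 - γ * L) + β * (1 - γ * L)) • y (t + 1) := by rw [hy t, hprev]; module
      _ = (-1 : R) • y (t + 1) := by congr 1; linear_combination -hγ
      _ = -y (t + 1) := neg_one_smul R _

end Recurrence

section Quadratic

variable {E : Type*}

theorem convexOn_const_mul_norm_sq [SeminormedAddCommGroup E] [NormedSpace ℝ E] {c : ℝ}
    (hc : 0 ≤ c) : ConvexOn ℝ Set.univ fun x : E => c * ‖x‖ ^ 2 :=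
  (convexOn_univ_norm.pow (fun _ _ => norm_nonneg _) 2).smul hc

variable [NormedAddCommGroup E] [InnerProductSpace ℝ E] [CompleteSpace E]

theorem gradient_half_mul_norm_sq (L : ℝ) :
    ∇ (fun x : E => L / 2 * ‖x‖ ^ 2) = fun x => L • x := by
  refine gradient_eq fun x => hasGradientAt_iff_hasFDerivAt.mpr ?_
  have hdual : InnerProductSpace.toDual ℝ E (L • x) = (L / 2) • 2 • innerSL ℝ x := by
    ext v
    simp only [map_smul, smul_apply, InnerProductSpace.toDual_apply_apply, smul_eq_mul,
      coe_innerSL_apply, nsmul_eq_mul, Nat.cast_ofNat]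
    ring
  exact hdual ▸ (hasStrictFDerivAt_norm_sq x).hasFDerivAt.const_mul (L / 2)

theorem nag_boundary_two_cycle_general {L β γ : ℝ} {a : E} (hL : 0 < L) (hβ : 1 + 2 * β ≠ 0)
    (hγ : γ = 2 / L * ((1 + β) / (1 + 2 * β))) (ha : a ≠ 0)
    {f : E → ℝ} (hf : f = fun x => L / 2 * ‖x‖ ^ 2)
    {y : ℕ → E} (hy0 : y 0 = a) (hy1 : y 1 = -a) (hy : IsNAGTrajectory γ β (∇ f) y) :
    ConvexOn ℝ Set.univ f ∧ LipschitzWith (Real.toNNReal L) (∇ f) ∧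
      (∀ t, y t = (-1 : ℝ) ^ t • a) ∧ (∀ t, y (t + 2) = y t) ∧
      (∃ s t, y s ≠ y t) ∧ ¬∃ l, Tendsto y atTop (𝓝 l) := by
  subst hf hy0
  rw [gradient_half_mul_norm_sq] at hy ⊢
  have hboundary : γ * L * (1 + 2 * β) = 2 * (1 + β) := by
    rw [hγ]
    field_simp
  have hanti : Antiperiodic y 1 := hy.antiperiodic_one hboundary hy1
  have hperiodic : Periodic y 2 := hanti.periodic
  have : IsAddTorsionFree E := .of_isTorsionFree ℝ E
  have hne : y 0 ≠ y 1 := hy1 ▸ self_ne_neg.mpr ha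
  refine ⟨convexOn_const_mul_norm_sq (by positivity), ?_,
    eq_neg_one_pow_smul_of_antiperiodic_one hanti, hperiodic, ⟨0, 1, hne⟩,
    not_tendsto_atTop_of_periodic_of_ne hperiodic two_pos hne⟩
  rw [Real.toNNReal_eq_nnnorm_of_nonneg hL.le]
  exact lipschitzWith_smul L

end Quadratic

/-- For `γ = (2/L)(1+β)/(1+2β)` on the boundary of the NAG
convergence region, the NAG trajectory on the convex `L`-smooth quadratic
`f(y) = (L/2) y²` started at `y₀ = a`, `y₁ = -a` satisfies `y t = (-1)^t a`:
it is 2-cyclic, non-constant, hence does not converge. -/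
theorem nag_boundary_two_cycle (L β γ a : ℝ) (hL : 0 < L)
    (hβ : β ∈ Set.Icc (0 : ℝ) 1)
    (hγ : γ = 2 / L * ((1 + β) / (1 + 2 * β))) (ha : a ≠ 0)
    (f : ℝ → ℝ) (hf : f = fun y => L / 2 * y ^ 2)
    (y : ℕ → ℝ) (hy0 : y 0 = a) (hy1 : y 1 = -a)
    (hrec : ∀ t, 1 ≤ t → y (t + 1) =
      (1 + β) * (y t - γ * deriv f (y t)) -
        β * (y (t - 1) - γ * deriv f (y (t - 1)))) :
    ConvexOn ℝ Set.univ f ∧ LipschitzWith (Real.toNNReal L) (deriv f) ∧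
      (∀ t, y t = (-1) ^ t * a) ∧ (∀ t, y (t + 2) = y t) ∧
      (∃ s t, y s ≠ y t) ∧ ¬∃ l, Filter.Tendsto y Filter.atTop (nhds l) := by
  have hgrad : ∇ f = deriv f := funext fun _ => gradient_eq_deriv'
  exact hgrad ▸ nag_boundary_two_cycle_general hL (by linarith [hβ.1]) hγ ha (by simpa using hf)
    hy0 hy1 (hgrad ▸ fun t => hrec (t + 1) t.succ_pos)
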